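/- arXiv:1307.0213 — 3 statements merged into one kernel-verified Lean document; each statement's English description precedes it below -/
import Mathlib

section
/- Let σ ∈ M(Δ) be a positive measure with Δ ⊂ [0,∞), and let τ ∈ M(Δ) be its inverse measure, i.e. 1/σ̂(z) = ℓ(z) + τ̂(z) with ℓ(z) = az + b, a = 1/|σ|. If σ satisfies Carleman's condition, then τ satisfies Carleman's condition. -/
/-!
Let `c_n` be the moments of `σ`, `e_n ≥ 0` those of the positive measure underlying `τ`, and
`s = ±1` the sign of `τ`.  Multiplying `1/σ̂ = z/c_0 + b + τ̂` by `σ̂` and comparing the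
asymptotic expansions at `z = -y → -∞` gives `b = -c_1/c_0²` and
`c_{n+2}/c_0 + b c_{n+1} + s ∑_{i ≤ n} e_i c_{n-i} = 0` (`moment_recurrence`).

For `n = 0` the Cauchy-Schwarz inequality `c_1² ≤ c_0 c_2` forces `s = -1`.  As `b ≤ 0` and all
terms of the convolution are nonnegative, `c_0 e_n ≤ c_{n+2}/c_0`, that is
`e_n ≤ c_{n+2}/c_0²`.

The bound shifts the index by two, and `summable_carleman_shift` shows that Carleman's condition
is insensitive to such a shift: by the weighted arithmetic-geometric mean inequality with the
auxiliary summable sequence `m⁻²`, `u^(1-2/m) ≤ e^4 (u + m⁻²)`.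

The expansions are handled through their exact remainders
`cauchyRem μ N y = ∫ x^N/(y+x) dμ`, which satisfy `F_{N+1} = c_N - y F_N` and `y F_N(y) → c_N`.
-/

open MeasureTheory Polynomial Set Filter Asymptotics

noncomputable section

/-- A finite Borel measure on `ℝ` of constant sign, encoded as a positive measure
together with a sign `±1`; the signed measure it represents is `sign • μ`. -/
structure SignMeasure : Type where
  μ : Measure ℝ
  sign : ℝ
  sign_unit : sign = 1 ∨ sign = -1
  finite : IsFiniteMeasure μ

namespace SignMeasure

/-- The `n`-th moment `∫ x^n ds(x)` of the signed measure. -/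
def moment (s : SignMeasure) (n : ℕ) : ℝ := s.sign * ∫ x, x ^ n ∂s.μ

/-- The Cauchy transform `ŝ(z) = ∫ ds(x)/(z - x)`. -/
def cauchy (s : SignMeasure) (z : ℂ) : ℂ :=
  (s.sign : ℂ) * ∫ x, (z - (x : ℂ))⁻¹ ∂s.μ

/-- The Cauchy transform restricted to the real axis. -/
def realCauchy (s : SignMeasure) (x : ℝ) : ℝ := s.sign * ∫ t, (x - t)⁻¹ ∂s.μ

/-- The support of the underlying positive measure. -/
def support (s : SignMeasure) : Set ℝ :=
  {x : ℝ | ∀ ε > 0, 0 < s.μ (Set.Ioo (x - ε) (x + ε))}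

/-- `Δ = Co(supp s)`, the smallest interval containing the support. -/
def interval (s : SignMeasure) : Set ℝ := convexHull ℝ s.support

/-- Membership in the class `M(Δ)`: infinitely many points in the support and
all moments finite. -/
def MemM (s : SignMeasure) : Prop :=
  s.support.Infinite ∧ ∀ n : ℕ, Integrable (fun x : ℝ => x ^ n) s.μ

/-- The total variation `|s|`. -/
def totalVariation (s : SignMeasure) : ℝ := (s.μ Set.univ).toReal

/-- Carleman's condition `∑ |c_n|^{-1/(2n)} = ∞` for a measure supported in `[0,∞)`. -/
def Carleman (s : SignMeasure) : Prop :=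
  ¬ Summable (fun n : ℕ => |s.moment (n + 1)| ^ (-(1 : ℝ) / (2 * (n + 1))))

/-- Carleman's condition for a measure supported in a half line: after an affine
change of variables `x ↦ a x + b` taking the support into `[0,∞)`, the moment
series diverges. -/
def CarlemanHalfLine (s : SignMeasure) : Prop :=
  ∃ a b : ℝ, a ≠ 0 ∧ (∀ x ∈ s.support, 0 ≤ a * x + b) ∧
    ¬ Summable (fun n : ℕ =>
      |s.sign * ∫ x, (a * x + b) ^ (n + 1) ∂s.μ| ^ (-(1 : ℝ) / (2 * (n + 1))))

end SignMeasure

/-- The complement of `Δ = Co(supp s)` in `ℂ`. -/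
def offInterval (s : SignMeasure) : Set ℂ := {z : ℂ | ∀ x ∈ s.interval, z ≠ (x : ℂ)}

/-- `t = ⟨sα, sβ⟩`, i.e. `dt(x) = ŝβ(x) dsα(x)` as signed measures; in particular
`ŝβ` is `sα`-integrable. -/
def IsNikProd (t sα sβ : SignMeasure) : Prop :=
  Integrable sβ.realCauchy sα.μ ∧
  t.μ = sα.μ.withDensity (fun x => ENNReal.ofReal |sβ.realCauchy x|) ∧
  ∀ᵐ x ∂sα.μ, t.sign * |sβ.realCauchy x| = sα.sign * sβ.realCauchy x

/-- A Nikishin system `(s_{1,1},…,s_{1,m}) = N(σ_1,…,σ_m)`, together with all the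
intermediate products `s_{j,k} = ⟨σ_j,…,σ_k⟩`, `1 ≤ j ≤ k ≤ m` (indices outside this
range carry junk values). -/
structure NikishinSystem (m : ℕ) : Type where
  σ : ℕ → SignMeasure
  s : ℕ → ℕ → SignMeasure
  mem : ∀ j, 1 ≤ j → j ≤ m → (σ j).MemM
  consec : ∀ j, 1 ≤ j → j + 1 ≤ m →
    Set.Subsingleton ((σ j).interval ∩ (σ (j + 1)).interval)
  noAtom : ∀ j, 1 ≤ j → j + 1 ≤ m →
    ∀ x ∈ (σ j).interval ∩ (σ (j + 1)).interval, (σ j).μ {x} = 0 ∧ (σ (j + 1)).μ {x} = 0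
  s_diag : ∀ j, s j j = σ j
  s_prod : ∀ j k, 1 ≤ j → j < k → k ≤ m → IsNikProd (s j k) (σ j) (s (j + 1) k)
  s_mem : ∀ j k, 1 ≤ j → j ≤ k → k ≤ m → (s j k).MemM

/-- `|n| = n_1 + ⋯ + n_m`. -/
def multiNorm (m : ℕ) (n : ℕ → ℕ) : ℕ := ∑ j ∈ Finset.Icc 1 m, n j

/-- `max_{j=1,…,m} n_j`. -/
def multiMax (m : ℕ) (n : ℕ → ℕ) : ℕ := (Finset.Icc 1 m).sup n

/-- The extended components `(n_0, n_1, …, n_m)` with `n_0 = max_j n_j - 1`. -/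
def multiComp (m : ℕ) (n : ℕ → ℕ) (j : ℕ) : ℕ :=
  if j = 0 then multiMax m n - 1 else n j

/-- `deg p ≤ d - 1`, with the convention that `d = 0` forces `p ≡ 0`. -/
def DegBound (p : Polynomial ℝ) (d : ℕ) : Prop :=
  (d = 0 → p = 0) ∧ (p ≠ 0 → p.natDegree < d)

/-- The linear form `A_{n,j}(z) = a_j(z) + ∑_{k=j+1}^m a_k(z) ŝ_{j+1,k}(z)`
(for `j = m` this is just `a_m`). -/
def formA (m : ℕ) (N : NikishinSystem m) (a : ℕ → Polynomial ℝ) (j : ℕ) (z : ℂ) : ℂ :=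
  Polynomial.aeval z (a j) +
    ∑ k ∈ Finset.Icc (j + 1) m, Polynomial.aeval z (a k) * (N.s (j + 1) k).cauchy z

/-- The restriction of the linear form `A_{n,j}` to the real axis. -/
def formAReal (m : ℕ) (N : NikishinSystem m) (a : ℕ → Polynomial ℝ) (j : ℕ) (x : ℝ) : ℝ :=
  (a j).eval x + ∑ k ∈ Finset.Icc (j + 1) m, (a k).eval x * (N.s (j + 1) k).realCauchy x

/-- `(a_0, …, a_m)` is a type I multi-point Hermite–Padé approximant of
`(ŝ_{1,1},…,ŝ_{1,m})` with respect to `w`. -/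
def IsTypeI (m : ℕ) (N : NikishinSystem m) (n : ℕ → ℕ) (w : Polynomial ℝ)
    (a : ℕ → Polynomial ℝ) : Prop :=
  (∃ j ≤ m, a j ≠ 0) ∧
  (∀ j, j ≤ m → DegBound (a j) (multiComp m n j)) ∧
  DifferentiableOn ℂ (fun z => formA m N a 0 z / Polynomial.aeval z w)
    (offInterval (N.σ 1)) ∧
  (fun z : ℂ => formA m N a 0 z / Polynomial.aeval z w) =O[Bornology.cobounded ℂ]
    fun z => (z ^ multiNorm m n)⁻¹

/-- Admissibility of the polynomial `w_n`: real coefficients (built in), degree at most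
`|n| + max_j n_j - 2`, and zeros in `ℂ ∖ Δ_1`. -/
def GoodW (m : ℕ) (N : NikishinSystem m) (n : ℕ → ℕ) (w : Polynomial ℝ) : Prop :=
  w ≠ 0 ∧ w.natDegree ≤ multiNorm m n + multiMax m n - 2 ∧
    ∀ x ∈ (N.σ 1).interval, w.eval x ≠ 0

/-! ### Remainders of the Cauchy transform -/

/-- The remainder `∫ x^N / (y + x) dμ(x)` of order `N` in the expansion of the Cauchy transform
of `μ` at `z = -y`. -/
def cauchyRem (μ : Measure ℝ) (N : ℕ) (y : ℝ) : ℝ := ∫ x, x ^ N * (y + x)⁻¹ ∂μ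

lemma ae_nonneg_of_support_subset (s : SignMeasure) (h : s.support ⊆ Set.Ici (0 : ℝ)) :
    ∀ᵐ x ∂s.μ, 0 ≤ x := by
  have h0 : s.μ (Set.Iio 0) = 0 := by
    refine measure_null_of_locally_null _ fun x hx => ?_
    have hx' : x ∉ s.support := fun hmem => (not_le.mpr (Set.mem_Iio.mp hx)) (h hmem)
    simp only [SignMeasure.support, Set.mem_ofPred_eq, not_forall, not_lt, nonpos_iff_eq_zero]
      at hx'
    obtain ⟨ε, hε, hz⟩ := hx'
    exact ⟨_, mem_nhdsWithin_of_mem_nhds (Ioo_mem_nhds (by linarith) (by linarith)), hz⟩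
  rw [ae_iff]
  convert h0 using 2
  ext x
  simp

lemma integrable_rem {μ : Measure ℝ} (hpos : ∀ᵐ x ∂μ, 0 ≤ x) (N : ℕ)
    (hN : Integrable (fun x : ℝ => x ^ N) μ) {y : ℝ} (hy : 0 < y) :
    Integrable (fun x : ℝ => x ^ N * (y + x)⁻¹) μ := by
  refine Integrable.mono' (hN.abs.const_mul y⁻¹) (by fun_prop) ?_
  filter_upwards [hpos] with x hx
  have h1 : (y + x)⁻¹ ≤ y⁻¹ := inv_anti₀ hy (by linarith)
  have h2 : 0 ≤ (y + x)⁻¹ := by positivity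
  rw [Real.norm_eq_abs, abs_mul, abs_of_nonneg h2, mul_comm]
  gcongr

lemma cauchyRem_succ {μ : Measure ℝ} (hpos : ∀ᵐ x ∂μ, 0 ≤ x)
    (hint : ∀ n : ℕ, Integrable (fun x : ℝ => x ^ n) μ) (N : ℕ) {y : ℝ} (hy : 0 < y) :
    y * cauchyRem μ N y = (∫ x, x ^ N ∂μ) - cauchyRem μ (N + 1) y := by
  unfold cauchyRem
  rw [← integral_const_mul, ← integral_sub (hint N) (integrable_rem hpos _ (hint _) hy)]
  refine integral_congr_ae ?_
  filter_upwards [hpos] with x hx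
  have : y + x ≠ 0 := by positivity
  field_simp
  ring

lemma tendsto_mul_cauchyRem {μ : Measure ℝ} (hpos : ∀ᵐ x ∂μ, 0 ≤ x)
    (hint : ∀ n : ℕ, Integrable (fun x : ℝ => x ^ n) μ) (N : ℕ) :
    Tendsto (fun y => y * cauchyRem μ N y) atTop (nhds (∫ x, x ^ N ∂μ)) := by
  unfold cauchyRem
  simp_rw [← integral_const_mul]
  refine tendsto_integral_filter_of_dominated_convergence (fun x => |x ^ N|) ?_ ?_
    (hint N).abs ?_
  · exact Eventually.of_forall fun y => by fun_prop
  · filter_upwards [eventually_gt_atTop 0] with y hy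
    filter_upwards [hpos] with x hx
    have h1 : y * (y + x)⁻¹ ≤ 1 := by
      rw [← div_eq_mul_inv, div_le_one (by positivity)]; linarith
    have h2 : 0 ≤ y * (y + x)⁻¹ := by positivity
    rw [Real.norm_eq_abs, mul_left_comm, abs_mul, abs_of_nonneg h2]
    exact mul_le_of_le_one_right (abs_nonneg _) h1
  · refine Eventually.of_forall fun x => ?_
    have h1 : Tendsto (fun y : ℝ => 1 - x * (y + x)⁻¹) atTop (nhds (1 - x * 0)) :=
      (tendsto_const_nhds).sub ((tendsto_inv_atTop_zero.comp
        (tendsto_atTop_add_const_right _ x tendsto_id)).const_mul x)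
    have h2 : Tendsto (fun y : ℝ => x ^ N * (1 - x * (y + x)⁻¹)) atTop (nhds (x ^ N)) := by
      simpa using h1.const_mul (x ^ N)
    refine h2.congr' ?_
    filter_upwards [eventually_gt_atTop (-x)] with y hy
    have : y + x ≠ 0 := by linarith
    field_simp
    ring

lemma tendsto_cauchyRem {μ : Measure ℝ} (hpos : ∀ᵐ x ∂μ, 0 ≤ x)
    (hint : ∀ n : ℕ, Integrable (fun x : ℝ => x ^ n) μ) (N : ℕ) :
    Tendsto (fun y => cauchyRem μ N y) atTop (nhds 0) := by
  have h := tendsto_inv_atTop_zero.mul (tendsto_mul_cauchyRem hpos hint N)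
  rw [zero_mul] at h
  refine h.congr' ?_
  filter_upwards [eventually_gt_atTop 0] with y hy
  field_simp

/-! ### Moments of a measure on the half line -/

lemma exists_pos_mem_support {s : SignMeasure} (h : s.support ⊆ Set.Ici (0 : ℝ))
    (hinf : s.support.Infinite) : ∃ x ∈ s.support, 0 < x := by
  obtain ⟨x, hx, hne⟩ := hinf.exists_notMem_finset {0}
  exact ⟨x, hx, lt_of_le_of_ne (h hx) fun h0 => hne (by simp [h0])⟩

lemma integral_pos_of_pos {s : SignMeasure} (h : s.support ⊆ Set.Ici (0 : ℝ))
    (hinf : s.support.Infinite) {f : ℝ → ℝ} (hf : Integrable f s.μ)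
    (h0 : ∀ x, 0 ≤ x → 0 ≤ f x) (hp : ∀ x, 0 < x → 0 < f x) : 0 < ∫ x, f x ∂s.μ := by
  obtain ⟨x, hx, hxp⟩ := exists_pos_mem_support h hinf
  rw [integral_pos_iff_support_of_nonneg_ae
    ((ae_nonneg_of_support_subset s h).mono fun x hx => h0 x hx) hf]
  refine (hx x hxp).trans_le (measure_mono fun t ht => ?_)
  exact (hp t (by linarith [ht.1])).ne'

lemma moment_pos {s : SignMeasure} (h : s.support ⊆ Set.Ici (0 : ℝ)) (hs : s.MemM) (n : ℕ) :
    0 < ∫ x, x ^ n ∂s.μ :=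
  integral_pos_of_pos h hs.1 (hs.2 n) (fun _ hx => pow_nonneg hx n) (fun _ hx => pow_pos hx n)

/-- Cauchy-Schwarz for the first moments, from `∫ (c₀ x - c₁)² dμ ≥ 0`. -/
lemma moment_one_sq_le {μ : Measure ℝ} (hint : ∀ n : ℕ, Integrable (fun x : ℝ => x ^ n) μ)
    (h0 : 0 < ∫ x, x ^ 0 ∂μ) :
    (∫ x, x ^ 1 ∂μ) ^ 2 ≤ (∫ x, x ^ 0 ∂μ) * ∫ x, x ^ 2 ∂μ := by
  set c0 := ∫ x, x ^ 0 ∂μ with hc0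
  set c1 := ∫ x, x ^ 1 ∂μ with hc1
  set c2 := ∫ x, x ^ 2 ∂μ with hc2
  have h : 0 ≤ ∫ x, (c0 * x - c1) ^ 2 ∂μ := integral_nonneg fun x => sq_nonneg _
  have e : ∫ x, (c0 * x - c1) ^ 2 ∂μ = c0 ^ 2 * c2 - 2 * c0 * c1 * c1 + c1 ^ 2 * c0 := by
    have : (fun x : ℝ => (c0 * x - c1) ^ 2)
        = fun x => (c0 ^ 2 * x ^ 2 - 2 * c0 * c1 * x ^ 1) + c1 ^ 2 * x ^ 0 := by
      ext x; ring
    have hd : Integrable (fun x : ℝ => c0 ^ 2 * x ^ 2 - 2 * c0 * c1 * x ^ 1) μ :=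
      ((hint 2).const_mul _).sub ((hint 1).const_mul _)
    rw [this, integral_add hd ((hint 0).const_mul _), integral_sub ((hint 2).const_mul _) ((hint 1).const_mul _),
      integral_const_mul, integral_const_mul, integral_const_mul]
  rw [e] at h
  nlinarith [h, h0]

/-! ### The moment recurrence -/

/-- On the negative axis the Cauchy transform is minus the remainder of order zero. -/
lemma cauchy_neg (s : SignMeasure) (y : ℝ) :
    s.cauchy (-(y : ℂ)) = ((-(s.sign * cauchyRem s.μ 0 y) : ℝ) : ℂ) := by
  have : (fun x : ℝ => (-(y : ℂ) - (x : ℂ))⁻¹)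
      = fun x : ℝ => ((-(x ^ 0 * (y + x)⁻¹) : ℝ) : ℂ) := by
    ext x
    push_cast
    rw [← neg_add', inv_neg, pow_zero, one_mul]
  unfold SignMeasure.cauchy cauchyRem
  rw [this, integral_complex_ofReal, integral_neg]
  push_cast
  ring

/-- Coefficient comparison in `F · (y/c₀ - b + s G) = 1`, where `F`, `G` are the remainders of
order zero of `μ` and `ν`. -/
lemma moment_recurrence {μ ν : Measure ℝ} (hμ0 : ∀ᵐ x ∂μ, 0 ≤ x) (hν0 : ∀ᵐ x ∂ν, 0 ≤ x)
    (hμ : ∀ n : ℕ, Integrable (fun x : ℝ => x ^ n) μ)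
    (hν : ∀ n : ℕ, Integrable (fun x : ℝ => x ^ n) ν) {b s : ℝ}
    (hc0 : (∫ x, x ^ 0 ∂μ) ≠ 0)
    (hrel : ∀ y > 0, cauchyRem μ 0 y *
      (y / (∫ x, x ^ 0 ∂μ) - b + s * cauchyRem ν 0 y) = 1) :
    b = - (∫ x, x ^ 1 ∂μ) / (∫ x, x ^ 0 ∂μ) ^ 2 ∧
    ∀ n : ℕ, (∫ x, x ^ (n + 2) ∂μ) / (∫ x, x ^ 0 ∂μ) + b * (∫ x, x ^ (n + 1) ∂μ)
      + s * ∑ i ∈ Finset.range (n + 1), (∫ x, x ^ i ∂ν) * (∫ x, x ^ (n - i) ∂μ) = 0 := by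
  set c : ℕ → ℝ := fun n => ∫ x, x ^ n ∂μ with hc
  set e : ℕ → ℝ := fun n => ∫ x, x ^ n ∂ν with he
  set F := cauchyRem μ with hF
  set G := cauchyRem ν with hG
  change c 0 ≠ 0 at hc0
  change ∀ y > 0, F 0 y * (y / c 0 - b + s * G 0 y) = 1 at hrel
  change b = - c 1 / c 0 ^ 2 ∧ ∀ n : ℕ, c (n + 2) / c 0 + b * c (n + 1)
      + s * ∑ i ∈ Finset.range (n + 1), e i * c (n - i) = 0
  have hFs : ∀ N, ∀ y > 0, y * F N y = c N - F (N + 1) y := fun N y hy =>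
    cauchyRem_succ hμ0 hμ N hy
  have hGs : ∀ N, ∀ y > 0, y * G N y = e N - G (N + 1) y := fun N y hy =>
    cauchyRem_succ hν0 hν N hy
  have hFt : ∀ N, Tendsto (fun y => y * F N y) atTop (nhds (c N)) := tendsto_mul_cauchyRem hμ0 hμ
  have hGt : ∀ N, Tendsto (fun y => y * G N y) atTop (nhds (e N)) := tendsto_mul_cauchyRem hν0 hν
  have hGz : ∀ N, Tendsto (fun y => G N y) atTop (nhds 0) := tendsto_cauchyRem hν0 hν
  have hA : ∀ y > 0, F 1 y / c 0 + b * F 0 y - s * (F 0 y * G 0 y) = 0 := by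
    intro y hy
    have h1 := hrel y hy
    have h2 := hFs 0 y hy
    rw [zero_add] at h2
    have h3 : F 1 y = c 0 - y * F 0 y := by linarith
    rw [h3]
    field_simp
    field_simp at h1
    linear_combination -h1
  have hb : c 1 / c 0 + b * c 0 = 0 := by
    have ht : Tendsto (fun y => (y * F 1 y) / c 0 + b * (y * F 0 y)
        - s * ((y * F 0 y) * G 0 y)) atTop
        (nhds (c 1 / c 0 + b * c 0 - s * (c 0 * 0))) :=
      (((hFt 1).div_const _).add ((hFt 0).const_mul b)).sub
        (((hFt 0).mul (hGz 0)).const_mul s)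
    have hz : Tendsto (fun y => (y * F 1 y) / c 0 + b * (y * F 0 y)
        - s * ((y * F 0 y) * G 0 y)) atTop (nhds 0) := by
      refine tendsto_const_nhds.congr' ?_
      filter_upwards [eventually_gt_atTop 0] with y hy
      linear_combination -y * hA y hy
    simpa using tendsto_nhds_unique ht hz
  -- Multiplying the identity of order `n` by `y` and letting `y → ∞`.
  have hlim : ∀ n : ℕ,
      (∀ y > 0, F (n + 2) y / c 0 + b * F (n + 1) y
        + s * (∑ i ∈ Finset.range n, e i * F (n - i) y + y * F 0 y * G n y) = 0) →
      c (n + 2) / c 0 + b * c (n + 1)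
        + s * ∑ i ∈ Finset.range (n + 1), e i * c (n - i) = 0 := by
    intro n hn
    have ht : Tendsto (fun y => (y * F (n + 2) y) / c 0 + b * (y * F (n + 1) y)
        + s * (∑ i ∈ Finset.range n, e i * (y * F (n - i) y) + (y * F 0 y) * (y * G n y)))
        atTop (nhds (c (n + 2) / c 0 + b * c (n + 1)
        + s * (∑ i ∈ Finset.range n, e i * c (n - i) + c 0 * e n))) :=
      (((hFt _).div_const _).add ((hFt _).const_mul b)).add
        (((tendsto_finsetSum _ fun i _ => (hFt (n - i)).const_mul (e i)).add
          ((hFt 0).mul (hGt n))).const_mul s)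
    have hz : Tendsto (fun y => (y * F (n + 2) y) / c 0 + b * (y * F (n + 1) y)
        + s * (∑ i ∈ Finset.range n, e i * (y * F (n - i) y) + (y * F 0 y) * (y * G n y)))
        atTop (nhds 0) := by
      refine tendsto_const_nhds.congr' ?_
      filter_upwards [eventually_gt_atTop 0] with y hy
      have hsum : ∑ i ∈ Finset.range n, e i * (y * F (n - i) y)
          = y * ∑ i ∈ Finset.range n, e i * F (n - i) y := by
        rw [Finset.mul_sum]
        exact Finset.sum_congr rfl fun i _ => by ring
      rw [hsum]
      linear_combination -y * hn y hy
    have := tendsto_nhds_unique ht hz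
    rw [Finset.sum_range_succ, Nat.sub_self, mul_comm (e n)]
    exact this
  -- The identity of order `n + 1` is the limiting identity minus `y` times the one of order `n`.
  have hrem : ∀ n : ℕ, ∀ y > 0, F (n + 2) y / c 0 + b * F (n + 1) y
        + s * (∑ i ∈ Finset.range n, e i * F (n - i) y + y * F 0 y * G n y) = 0 := by
    intro n
    induction n with
    | zero =>
      intro y hy
      have h1 := hFs 0 y hy
      have h2 := hFs 1 y hy
      simp only [zero_add, Finset.range_zero, Finset.sum_empty, Nat.reduceAdd] at h1 h2 ⊢
      linear_combination hb - y * hA y hy + h2 / c 0 + b * h1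
    | succ n ih =>
      intro y hy
      have hl := hlim n ih
      have h1 := hFs (n + 2) y hy
      have h2 := hFs (n + 1) y hy
      have h3 := hGs n y hy
      have h4 := hFs 0 y hy
      have hsum : y * ∑ i ∈ Finset.range n, e i * F (n - i) y
          = ∑ i ∈ Finset.range n, e i * c (n - i)
            - ∑ i ∈ Finset.range n, e i * F (n + 1 - i) y := by
        rw [Finset.mul_sum, ← Finset.sum_sub_distrib]
        refine Finset.sum_congr rfl fun i hi => ?_
        have hi' : n + 1 - i = n - i + 1 := by
          have := Finset.mem_range.mp hi
          omega
        rw [hi', mul_left_comm, hFs (n - i) y hy, mul_sub]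
      rw [Finset.sum_range_succ, Nat.sub_self] at hl
      rw [Finset.sum_range_succ, Nat.add_sub_cancel_left]
      rw [zero_add] at h4
      linear_combination hl - y * ih y hy + h1 / c 0 + b * h2 + s * hsum
        + s * (y * F 0 y * h3 + e n * h4)
  refine ⟨?_, fun n => hlim n (hrem n)⟩
  field_simp
  field_simp at hb
  linarith

/-! ### Carleman's series under an index shift -/

/-- Convergence of Carleman's series passes from `E` to any `A` with `E n ≤ K A (n + 2)`: neither
the constant nor the index shift matters.  With `m = n + 3` and `u` the `n`-th term for `E`, the
shifted term for `A` is at most `K^(1/(2m)) u^(1-2/m)`. -/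
lemma summable_carleman_shift {A E : ℕ → ℝ} {K : ℝ} (hK : 0 < K)
    (hE : ∀ n, 0 < E n) (hEA : ∀ n, E n ≤ K * A (n + 2))
    (hs : Summable fun n : ℕ => E (n + 1) ^ (-(1 : ℝ) / (2 * (n + 1)))) :
    Summable fun n : ℕ => A (n + 1) ^ (-(1 : ℝ) / (2 * (n + 1))) := by
  rw [← summable_nat_add_iff 2]
  have hv : Summable fun n : ℕ => (((n + 3 : ℕ) : ℝ) ^ 2)⁻¹ :=
    (summable_nat_add_iff 3).mpr (Real.summable_nat_pow_inv.mpr one_lt_two)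
  refine Summable.of_nonneg_of_le (fun n => ?_) (fun n => ?_)
    ((hs.add hv).mul_left (max K 1 * Real.exp 4))
  · have h1 := (hE (n + 1)).trans_le (hEA (n + 1))
    have h2 : 0 < A (n + 2 + 1) := pos_of_mul_pos_right h1 hK.le
    exact Real.rpow_nonneg h2.le _
  · have hEp := hE (n + 1)
    set x := E (n + 1) with hx
    set m : ℝ := n + 3 with hm
    have hm3 : (3 : ℝ) ≤ m := by simp [hm]
    have hm0 : 0 < m := by linarith
    set u := x ^ (-(1 : ℝ) / (2 * (n + 1))) with hu
    have hu0 : 0 ≤ u := Real.rpow_nonneg hEp.le _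
    set v : ℝ := (m ^ 2)⁻¹ with hvd
    have hv0 : 0 < v := by positivity
    have hn0 : (n : ℝ) + 1 ≠ 0 := by positivity
    have hexp : (-(1 : ℝ) / (2 * (((n + 2 : ℕ) : ℝ) + 1))) = -1 / (2 * m) := by
      push_cast; rw [hm]; ring
    have hcast : ((n + 3 : ℕ) : ℝ) = m := by push_cast; rfl
    rw [hexp, hcast]
    have hA : x / K ≤ A (n + 2 + 1) := by
      rw [div_le_iff₀ hK, mul_comm]; exact hEA (n + 1)
    have s1 : A (n + 2 + 1) ^ (-1 / (2 * m)) ≤ (x / K) ^ (-1 / (2 * m)) :=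
      Real.rpow_le_rpow_of_nonpos (by positivity) hA
        (div_nonpos_of_nonpos_of_nonneg (by norm_num) (by positivity))
    have s2 : (x / K) ^ (-1 / (2 * m)) = K ^ (1 / (2 * m)) * u ^ ((m - 2) / m) := by
      rw [Real.div_rpow hEp.le hK.le, hu, ← Real.rpow_mul hEp.le]
      have a1 : (-(1 : ℝ) / (2 * (n + 1))) * ((m - 2) / m) = -1 / (2 * m) := by
        have : m - 2 = n + 1 := by rw [hm]; ring
        rw [this]; field_simp
      rw [a1, neg_div, Real.rpow_neg hK.le, div_inv_eq_mul, mul_comm]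
    have s3 : K ^ (1 / (2 * m)) ≤ max K 1 := by
      calc K ^ (1 / (2 * m)) ≤ (max K 1) ^ (1 / (2 * m)) :=
            Real.rpow_le_rpow hK.le (le_max_left _ _) (by positivity)
        _ ≤ (max K 1) ^ (1 : ℝ) := by
            refine Real.rpow_le_rpow_of_exponent_le (le_max_right _ _) ?_
            rw [div_le_one (by positivity)]; linarith
        _ = _ := Real.rpow_one _
    have s4 : u ^ ((m - 2) / m) * v ^ (2 / m) ≤ u + v := by
      have hw1 : 0 ≤ (m - 2) / m := div_nonneg (by linarith) hm0.le
      have hw2 : 0 ≤ 2 / m := by positivity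
      have hw : (m - 2) / m + 2 / m = 1 := by field_simp; ring
      have := Real.geom_mean_le_arith_mean2_weighted hw1 hw2 hu0 hv0.le hw
      nlinarith
    have s5 : Real.exp (-4) ≤ v ^ (2 / m) := by
      rw [Real.rpow_def_of_pos hv0, hvd, Real.log_inv, Real.log_pow]
      refine Real.exp_le_exp.mpr ?_
      have hl : Real.log m ≤ m := (Real.log_le_sub_one_of_pos hm0).trans (by linarith)
      have : Real.log m / m ≤ 1 := (div_le_one hm0).mpr hl
      have e1 : -(((2 : ℕ) : ℝ) * Real.log m) * (2 / m) = -4 * (Real.log m / m) := by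
        push_cast; ring
      rw [e1]; linarith
    have s6 : u ^ ((m - 2) / m) ≤ Real.exp 4 * (u + v) := by
      have hp : 0 ≤ u ^ ((m - 2) / m) := Real.rpow_nonneg hu0 _
      have h1 : u ^ ((m - 2) / m) * Real.exp (-4) ≤ u + v :=
        (mul_le_mul_of_nonneg_left s5 hp).trans s4
      rw [Real.exp_neg, ← div_eq_mul_inv, div_le_iff₀ (Real.exp_pos 4)] at h1
      linarith
    calc A (n + 2 + 1) ^ (-1 / (2 * m)) ≤ K ^ (1 / (2 * m)) * u ^ ((m - 2) / m) := s1.trans s2.le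
      _ ≤ max K 1 * (Real.exp 4 * (u + v)) := by
          gcongr
      _ = max K 1 * Real.exp 4 * (u + v) := by ring

/-- If `σ ∈ M(Δ)` is positive with `Δ ⊂ [0,∞)` and `τ` is its inverse
measure, i.e. `1/σ̂(z) = az + b + τ̂(z)` with `a = 1/|σ|`, then Carleman's condition for
`σ` implies Carleman's condition for `τ`. -/
theorem carleman_of_inverse_measure (σ τ : SignMeasure) (b : ℝ)
    (hσpos : σ.sign = 1) (hσ : σ.MemM) (hτ : τ.MemM)
    (hΔ : σ.interval ⊆ Set.Ici (0 : ℝ))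
    (hτsupp : τ.support ⊆ σ.interval)
    (hinv : ∀ z ∈ offInterval σ,
      (σ.cauchy z)⁻¹ = ((σ.totalVariation : ℂ))⁻¹ * z + (b : ℂ) + τ.cauchy z)
    (hcar : σ.Carleman) :
    τ.Carleman := by
  have hσS : σ.support ⊆ Set.Ici (0 : ℝ) := (subset_convexHull ℝ _).trans hΔ
  have hτS : τ.support ⊆ Set.Ici (0 : ℝ) := hτsupp.trans hΔ
  have hσ0 := ae_nonneg_of_support_subset σ hσS
  have hτ0 := ae_nonneg_of_support_subset τ hτS
  have hcpos := moment_pos hσS hσ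
  have hepos := moment_pos hτS hτ
  have htv : σ.totalVariation = ∫ x, x ^ 0 ∂σ.μ := by
    simp [SignMeasure.totalVariation, measureReal_def]
  have hFpos : ∀ y > 0, 0 < cauchyRem σ.μ 0 y := fun y hy =>
    integral_pos_of_pos hσS hσ.1 (integrable_rem hσ0 0 (hσ.2 0) hy)
      (fun x hx => by positivity) (fun x hx => by positivity)
  have hrel : ∀ y > 0, cauchyRem σ.μ 0 y *
      (y / (∫ x, x ^ 0 ∂σ.μ) - b + τ.sign * cauchyRem τ.μ 0 y) = 1 := by
    intro y hy
    have hmem : (-(y : ℂ)) ∈ offInterval σ := by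
      intro x hx hyx
      have hx0 : 0 ≤ x := hΔ hx
      have : -y = x := by exact_mod_cast hyx
      linarith
    have h := hinv _ hmem
    rw [cauchy_neg, cauchy_neg, hσpos, htv] at h
    have h' : (-(1 * cauchyRem σ.μ 0 y))⁻¹ =
        (∫ x, x ^ 0 ∂σ.μ)⁻¹ * (-y) + b + -(τ.sign * cauchyRem τ.μ 0 y) := by
      exact_mod_cast h
    have hF := (hFpos y hy).ne'
    rw [one_mul, inv_neg] at h'
    have h2 : y / (∫ x, x ^ 0 ∂σ.μ) - b + τ.sign * cauchyRem τ.μ 0 y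
        = (cauchyRem σ.μ 0 y)⁻¹ := by
      rw [div_eq_mul_inv]; linarith
    rw [h2, mul_inv_cancel₀ hF]
  obtain ⟨hb, hrec⟩ := moment_recurrence hσ0 hτ0 hσ.2 hτ.2 (hcpos 0).ne' hrel
  have hc0 := hcpos 0
  have hb0 : b ≤ 0 := by
    rw [hb]
    exact div_nonpos_of_nonpos_of_nonneg (neg_nonpos.mpr (hcpos 1).le) (sq_nonneg _)
  have hsign : τ.sign = -1 := by
    rcases τ.sign_unit with h1 | h1
    · exfalso
      -- A sum of a nonnegative (Cauchy-Schwarz) and a positive term would vanish.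
      have hr := hrec 0
      have hcs := moment_one_sq_le hσ.2 hc0
      have he0 := mul_pos (hepos 0) hc0
      rw [h1, hb] at hr
      simp only [zero_add, Finset.range_one, Finset.sum_singleton, one_mul, Nat.sub_self] at hr
      have hnn : 0 ≤ (∫ x, x ^ 2 ∂σ.μ) / (∫ x, x ^ 0 ∂σ.μ)
          + -(∫ x, x ^ 1 ∂σ.μ) / (∫ x, x ^ 0 ∂σ.μ) ^ 2 * (∫ x, x ^ 1 ∂σ.μ) := by
        have e1 : (∫ x, x ^ 2 ∂σ.μ) / (∫ x, x ^ 0 ∂σ.μ)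
            + -(∫ x, x ^ 1 ∂σ.μ) / (∫ x, x ^ 0 ∂σ.μ) ^ 2 * (∫ x, x ^ 1 ∂σ.μ)
            = ((∫ x, x ^ 0 ∂σ.μ) * (∫ x, x ^ 2 ∂σ.μ) - (∫ x, x ^ 1 ∂σ.μ) ^ 2)
              / (∫ x, x ^ 0 ∂σ.μ) ^ 2 := by
          field_simp
          ring
        rw [e1]
        exact div_nonneg (by linarith) (sq_nonneg _)
      linarith
    · exact h1
  have hbound : ∀ n, (∫ x, x ^ n ∂τ.μ) ≤
      ((∫ x, x ^ 0 ∂σ.μ) ^ 2)⁻¹ * ∫ x, x ^ (n + 2) ∂σ.μ := by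
    intro n
    have hr := hrec n
    have hsingle : (∫ x, x ^ n ∂τ.μ) * (∫ x, x ^ (n - n) ∂σ.μ) ≤
        ∑ i ∈ Finset.range (n + 1), (∫ x, x ^ i ∂τ.μ) * (∫ x, x ^ (n - i) ∂σ.μ) :=
      Finset.single_le_sum
        (f := fun i => (∫ x, x ^ i ∂τ.μ) * (∫ x, x ^ (n - i) ∂σ.μ))
        (fun i _ => (mul_pos (hepos i) (hcpos (n - i))).le) (Finset.self_mem_range_succ n)
    rw [Nat.sub_self] at hsingle
    have hb1 := mul_nonpos_of_nonpos_of_nonneg hb0 (hcpos (n + 1)).le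
    rw [hsign] at hr
    have h3 : (∫ x, x ^ n ∂τ.μ) * (∫ x, x ^ 0 ∂σ.μ) ≤
        (∫ x, x ^ (n + 2) ∂σ.μ) / (∫ x, x ^ 0 ∂σ.μ) := by linarith
    rw [← div_eq_inv_mul, le_div_iff₀ (by positivity), pow_two, ← mul_assoc]
    exact (le_div_iff₀ hc0).mp h3
  have hσm : ∀ n, |σ.moment n| = ∫ x, x ^ n ∂σ.μ := fun n => by
    rw [SignMeasure.moment, hσpos, one_mul, abs_of_pos (hcpos n)]
  have hτm : ∀ n, |τ.moment n| = ∫ x, x ^ n ∂τ.μ := fun n => by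
    rw [SignMeasure.moment, hsign, neg_one_mul, abs_neg, abs_of_pos (hepos n)]
  intro hsum
  refine hcar ?_
  simp_rw [hτm] at hsum
  simp_rw [hσm]
  exact summable_carleman_shift (A := fun n => ∫ x, x ^ n ∂σ.μ)
    (E := fun n => ∫ x, x ^ n ∂τ.μ) (by positivity) hepos hbound hsum

end
end

section
/- Let c_0, c_1, …, c_{n+2} be the moments of a finite positive Borel measure on a subset of [0,∞) (so c_0 > 0). Let Ω_n be the determinant of the (n+2)×(n+2) lower Hessenberg matrix whose (i,k) entry (1 ≤ i, k ≤ n+2) equals c_{i−k+1} when i ≥ k−1 and equals 0 when k > i+1 (so the diagonal entries are all c_1, the superdiagonal entries are all c_0, and the entry in row i of column 1 is c_i). Then |Ω_n| ≤ 2^{n+1} · c_0^{n+1} · c_{n+2}. -/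
/-! The determinant of the Hessenberg matrix is controlled through a slightly larger family: let
`f s m` be the determinant of the `(m+1) × (m+1)` matrix whose first column is
`c (s+1), …, c (s+m+1)` and whose other columns are those of the moment Hessenberg matrix. The
first row has only two nonzero entries, so Laplace expansion along it gives
`f s (m+1) = c (s+1) * f 0 m - c 0 * f (s+1) m` (`det_shiftHess_succ`). Moments of a measure on
`[0,∞)` satisfy Chebyshev's inequality `c p * c q ≤ c 0 * c (p+q)` (`moment_mul_le`), so
induction on `m` gives `|f s m| ≤ 2^m * c 0^m * c (s+m+1)`, each step doubling the constant. The
theorem is the case `s = 0`, `m = n + 1`. -/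

open MeasureTheory Polynomial Set Filter Asymptotics

noncomputable section

/-- The moment Hessenberg matrix of size `m + 1` with its first column replaced by
`c (s+1), …, c (s+m+1)`; the actual Hessenberg matrix is the case `s = 0`. -/
def shiftHess (c : ℕ → ℝ) (s m : ℕ) : Matrix (Fin (m + 1)) (Fin (m + 1)) ℝ := fun i k =>
  if (k : ℕ) = 0 then c (s + i + 1) else
    if (k : ℕ) ≤ (i : ℕ) + 1 then c ((i : ℕ) + 1 - (k : ℕ)) else 0

/-- Expansion along the first row, whose only nonzero entries are `c (s+1)` and `c 0`. -/
theorem det_shiftHess_succ (c : ℕ → ℝ) (s m : ℕ) :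
    (shiftHess c s (m + 1)).det =
      c (s + 1) * (shiftHess c 0 m).det - c 0 * (shiftHess c (s + 1) m).det := by
  rw [Matrix.det_succ_row_zero, Fin.sum_univ_succ, Fin.sum_univ_succ, Finset.sum_eq_zero]
  · have h0 : (shiftHess c s (m + 1)).submatrix Fin.succ (Fin.succAbove 0) = shiftHess c 0 m := by
      ext i k
      rcases Nat.eq_zero_or_pos (k : ℕ) with hk | hk
      · simp [shiftHess, hk]
      · simp [shiftHess, hk.ne']
    have h1 : (shiftHess c s (m + 1)).submatrix Fin.succ (Fin.succAbove (Fin.succ 0)) =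
        shiftHess c (s + 1) m := by
      ext i k
      refine Fin.cases ?_ (fun k => ?_) k
      · simp [shiftHess]
        congr 1
        ring
      · simp [shiftHess, Fin.succAbove, Fin.lt_def]
    rw [h0, h1]
    simp [shiftHess]
    ring
  · intro k _
    simp [shiftHess]

/-- Chebyshev's inequality for moments: integrate `(x^p - y^p) * (x^q - y^q) ≥ 0` in `x` and then
in `y`. -/
theorem moment_mul_le (μ : Measure ℝ) [IsFiniteMeasure μ]
    (hpos : ∀ᵐ x ∂μ, 0 ≤ x) (hmom : ∀ k : ℕ, Integrable (fun x : ℝ => x ^ k) μ)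
    (c : ℕ → ℝ) (hc : ∀ k, c k = ∫ x, x ^ k ∂μ) (p q : ℕ) :
    c p * c q ≤ c 0 * c (p + q) := by
  have hreal : μ.real univ = c 0 := by simp [hc]
  -- The integral of a combination of the moments `p + q`, `p`, `q`, `0`.
  have key : ∀ A B C D : ℝ, ∫ x, (A * x ^ (p + q) - B * x ^ p - C * x ^ q + D) ∂μ =
      A * c (p + q) - B * c p - C * c q + D * c 0 := by
    intro A B C D
    have i1 := (hmom (p + q)).const_mul A
    have i2 := (hmom p).const_mul B
    have i3 := (hmom q).const_mul C
    have i12 : Integrable (fun x => A * x ^ (p + q) - B * x ^ p) μ := i1.sub i2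
    have i123 : Integrable (fun x => A * x ^ (p + q) - B * x ^ p - C * x ^ q) μ := i12.sub i3
    rw [integral_add i123 (integrable_const D), integral_sub i12 i3, integral_sub i1 i2]
    simp only [integral_const_mul, integral_const, hreal, ← hc, smul_eq_mul]
    ring
  have inner_nonneg : ∀ y : ℝ, 0 ≤ y →
      0 ≤ c 0 * y ^ (p + q) - c q * y ^ p - c p * y ^ q + c (p + q) := by
    intro y hy
    have h : 0 ≤ ∫ x, (1 * x ^ (p + q) - y ^ q * x ^ p - y ^ p * x ^ q + y ^ (p + q)) ∂μ := by
      apply integral_nonneg_of_ae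
      filter_upwards [hpos] with x hx
      have : 0 ≤ (x ^ p - y ^ p) * (x ^ q - y ^ q) := by
        rcases le_total x y with h | h
        · exact mul_nonneg_of_nonpos_of_nonpos (sub_nonpos.2 (by gcongr))
            (sub_nonpos.2 (by gcongr))
        · exact mul_nonneg (sub_nonneg.2 (by gcongr)) (sub_nonneg.2 (by gcongr))
      simp only [Pi.zero_apply]
      calc (0 : ℝ) ≤ _ := this
        _ = _ := by ring
    rw [key] at h
    linarith
  have h : 0 ≤ ∫ y, (c 0 * y ^ (p + q) - c q * y ^ p - c p * y ^ q + c (p + q)) ∂μ := by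
    apply integral_nonneg_of_ae
    filter_upwards [hpos] with y hy using inner_nonneg y hy
  rw [key] at h
  linarith

/-- The bound only uses nonnegativity of the sequence and Chebyshev's inequality. -/
theorem abs_det_shiftHess_le (c : ℕ → ℝ) (hnn : ∀ k, 0 ≤ c k)
    (hmul : ∀ p q, c p * c q ≤ c 0 * c (p + q)) (m : ℕ) :
    ∀ s, |(shiftHess c s m).det| ≤ 2 ^ m * c 0 ^ m * c (s + m + 1) := by
  induction m with
  | zero =>
    intro s
    simp [shiftHess, abs_of_nonneg (hnn _)]
  | succ m ih =>
    intro s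
    have hK : 0 ≤ 2 ^ m * c 0 ^ m := mul_nonneg (by positivity) (pow_nonneg (hnn 0) m)
    rw [det_shiftHess_succ]
    calc |c (s + 1) * (shiftHess c 0 m).det - c 0 * (shiftHess c (s + 1) m).det|
        ≤ c (s + 1) * |(shiftHess c 0 m).det| + c 0 * |(shiftHess c (s + 1) m).det| := by
          refine (abs_sub _ _).trans_eq ?_
          rw [abs_mul, abs_mul, abs_of_nonneg (hnn _), abs_of_nonneg (hnn _)]
      _ ≤ c (s + 1) * (2 ^ m * c 0 ^ m * c (0 + m + 1)) +
          c 0 * (2 ^ m * c 0 ^ m * c (s + 1 + m + 1)) :=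
          add_le_add (mul_le_mul_of_nonneg_left (ih 0) (hnn _))
            (mul_le_mul_of_nonneg_left (ih (s + 1)) (hnn _))
      _ = 2 ^ m * c 0 ^ m * (c (s + 1) * c (m + 1)) +
          2 ^ m * c 0 ^ m * (c 0 * c (s + (m + 1) + 1)) := by
          rw [show s + 1 + m + 1 = s + (m + 1) + 1 by ring, zero_add]
          ring
      _ ≤ 2 ^ m * c 0 ^ m * (c 0 * c (s + (m + 1) + 1)) +
          2 ^ m * c 0 ^ m * (c 0 * c (s + (m + 1) + 1)) := by
          refine add_le_add (mul_le_mul_of_nonneg_left ?_ hK) le_rfl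
          refine (hmul _ _).trans_eq ?_
          congr 2
          ring
      _ = 2 ^ (m + 1) * c 0 ^ (m + 1) * c (s + (m + 1) + 1) := by ring

/-- Bound for the lower Hessenberg moment determinant `Ω_n`: the
`(n+2)×(n+2)` matrix with entries `c_{i-k+1}` (1-based indices, entry `0` above the
superdiagonal) has `|det| ≤ 2^{n+1} c₀^{n+1} c_{n+2}`. -/
theorem hessenberg_det_bound (μ : Measure ℝ) [IsFiniteMeasure μ]
    (hpos : ∀ᵐ x ∂μ, 0 ≤ x)
    (hmom : ∀ k : ℕ, Integrable (fun x : ℝ => x ^ k) μ)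
    (c : ℕ → ℝ) (hc : ∀ k, c k = ∫ x, x ^ k ∂μ) (hc0 : 0 < c 0)
    (n : ℕ) (M : Matrix (Fin (n + 2)) (Fin (n + 2)) ℝ)
    (hM : ∀ i k : Fin (n + 2),
      M i k = if (k : ℕ) ≤ (i : ℕ) + 1 then c ((i : ℕ) + 1 - (k : ℕ)) else 0) :
    |M.det| ≤ 2 ^ (n + 1) * c 0 ^ (n + 1) * c (n + 2) := by
  have hnn : ∀ k, 0 ≤ c k := fun k => by
    rw [hc]
    apply integral_nonneg_of_ae
    filter_upwards [hpos] with x hx using pow_nonneg hx k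
  have hM' : M = shiftHess c 0 (n + 1) := by
    ext i k
    rw [hM, shiftHess]
    split_ifs <;> simp_all
  have h := abs_det_shiftHess_le c hnn (moment_mul_le μ hpos hmom c hc) (n + 1) 0
  rw [← hM'] at h
  simpa [add_assoc] using h

end
end

section
/- Let σ be a finite positive Borel measure with support in Δ ⊂ [0,∞) containing infinitely many points, all moments c_n = ∫ x^n dσ(x) finite, and let τ ∈ M(Δ) be its inverse measure, i.e. 1/σ̂(z) = az + b + τ̂(z) with a = 1/|σ|. Then the moments d_n = ∫ x^n dτ(x) satisfy |d_n| ≤ 2^{n+1} · c_{n+2} / c_0^2 for every n ≥ 0. -/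
/-!
Put `w = 1/z`. Then `z σ̂(z)` and `(az + b + τ̂(z))/z` have asymptotic expansions in powers of `w`
along `z = iy`, `y → ∞`, with coefficients `c₀, c₁, …` and `a, b, d₀, d₁, …`
(`tendsto_momentRemainder`). Their product is `1`, so the Cauchy product of the two coefficient
sequences is `1, 0, 0, …` (`cauchyProduct_eq_zero`), which is the triangular system for the `d_n`.

The bound follows by strong induction on that system. Writing `u = (a, b, d₀, d₁, …)`, one shows
`|u_{k+1}| ≤ 2^k c_{k+1} / c₀²`: the products `c_i c_j` that occur are at most `c₀ c_{i+j}` by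
Chebyshev's inequality on `[0, ∞)` (`chebyshev_moment`), and the powers of two sum up by
`1 + (1 + 2 + ⋯ + 2^{k-1}) = 2^k` (`abs_le_of_cauchyProduct_eq_zero`).
-/


open MeasureTheory Polynomial Set Filter Asymptotics

noncomputable section

/-! ### The triangular system and its solution -/

/-- Two functions with asymptotic expansions in powers of `w`, given through their successive
remainders `S k = s k + w * S (k + 1)` and `U k = u k + w * U (k + 1)`, and whose product is
eventually `1`: the Cauchy product of the coefficients vanishes in every positive degree. -/
lemma cauchyProduct_eq_zero {ι : Type*} {l : Filter ι} [l.NeBot] {w : ι → ℂ}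
    {S U : ℕ → ι → ℂ} {s u : ℕ → ℂ} (hw : ∀ᶠ t in l, w t ≠ 0)
    (hS : ∀ k, ∀ᶠ t in l, S k t = s k + w t * S (k + 1) t)
    (hU : ∀ k, ∀ᶠ t in l, U k t = u k + w t * U (k + 1) t)
    (hSl : ∀ k, Tendsto (S k) l (nhds (s k))) (hUl : ∀ k, Tendsto (U k) l (nhds (u k)))
    (h1 : ∀ᶠ t in l, S 0 t * U 0 t = 1) (n : ℕ) :
    ∑ i ∈ Finset.range (n + 2), s i * u (n + 1 - i) = 0 := by
  -- `E k` is the `k`-th remainder of the product, with limit the `k`-th coefficient.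
  let E : ℕ → ι → ℂ := fun k t => S k t * U 0 t + ∑ i ∈ Finset.range k, s i * U (k - i) t
  let e : ℕ → ℂ := fun k => ∑ i ∈ Finset.range (k + 1), s i * u (k - i)
  have hEl : ∀ k, Tendsto (E k) l (nhds (e k)) := by
    intro k
    have : e k = s k * u 0 + ∑ i ∈ Finset.range k, s i * u (k - i) := by
      simp only [e]
      rw [Finset.sum_range_succ, Nat.sub_self, add_comm]
    rw [this]
    exact ((hSl k).mul (hUl 0)).add
      (tendsto_finsetSum _ fun i _ => (hUl (k - i)).const_mul (s i))
  have hErec : ∀ k, ∀ᶠ t in l, E k t = e k + w t * E (k + 1) t := by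
    intro k
    have hU' : ∀ᶠ t in l, ∀ i ∈ Finset.range (k + 1),
        U (k - i) t = u (k - i) + w t * U (k - i + 1) t :=
      (Finset.eventually_all _).2 fun i _ => hU (k - i)
    filter_upwards [hS k, hU'] with t h2 h3
    have key : ∑ i ∈ Finset.range (k + 1), s i * U (k - i) t
        = e k + w t * ∑ i ∈ Finset.range (k + 1), s i * U (k + 1 - i) t := by
      simp only [e]
      rw [Finset.mul_sum, ← Finset.sum_add_distrib]
      refine Finset.sum_congr rfl fun i hi => ?_
      rw [h3 i hi, Nat.sub_add_comm (Nat.lt_succ_iff.1 (Finset.mem_range.1 hi))]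
      ring
    have key2 := key
    rw [Finset.sum_range_succ, Nat.sub_self] at key2
    simp only [E]
    linear_combination U 0 t * h2 + key2
  -- Once a remainder is eventually constant, it equals its limit and the next remainder vanishes.
  have hstep : ∀ k (c : ℂ), (∀ᶠ t in l, E k t = c) → ∀ᶠ t in l, E (k + 1) t = 0 := by
    intro k c hc
    have hce : e k = c :=
      tendsto_nhds_unique (hEl k) (tendsto_const_nhds.congr' (hc.mono fun t ht => ht.symm))
    filter_upwards [hc, hErec k, hw] with t h2 h3 h4
    rw [h2, hce] at h3
    have : w t * E (k + 1) t = 0 := by linear_combination -h3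
    exact (mul_eq_zero.1 this).resolve_left h4
  have hzero : ∀ k, ∀ᶠ t in l, E (k + 1) t = 0 := by
    intro k
    induction k with
    | zero => exact hstep 0 1 (by simpa [E] using h1)
    | succ k ih => exact hstep (k + 1) 0 ih
  exact tendsto_nhds_unique (hEl (n + 1))
    (tendsto_const_nhds.congr' ((hzero n).mono fun t ht => ht.symm))

/-- The triangular system, together with `c i * c j ≤ c 0 * c (i + j)`, bounds its solution `u`. -/
lemma abs_le_of_cauchyProduct_eq_zero {c u : ℕ → ℝ} (hc0 : 0 < c 0) (hc : ∀ i, 0 ≤ c i)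
    (hcheb : ∀ i j, 0 < i → c i * c j ≤ c 0 * c (i + j)) (hu0 : u 0 = (c 0)⁻¹)
    (hrec : ∀ n, ∑ i ∈ Finset.range (n + 2), c i * u (n + 1 - i) = 0) (n : ℕ) :
    |u (n + 1)| ≤ 2 ^ n * c (n + 1) / c 0 ^ 2 := by
  induction n using Nat.strong_induction_on with
  | _ n ih =>
    have h := hrec n
    rw [← Finset.sum_range_reflect, Finset.sum_range_succ, Finset.sum_range_succ'] at h
    have hsum : ∑ k ∈ Finset.range n, c (n + 2 - 1 - (k + 1)) *
          u (n + 1 - (n + 2 - 1 - (k + 1)))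
        = ∑ k ∈ Finset.range n, c (n - k) * u (k + 1) := by
      refine Finset.sum_congr rfl fun k hk => ?_
      have := Finset.mem_range.1 hk
      congr 2 <;> omega
    rw [hsum] at h
    simp only [Nat.sub_zero, Nat.sub_self, hu0,
      show n + 2 - 1 - (n + 1) = 0 by omega, show n + 2 - 1 - 0 = n + 1 by omega] at h
    have hterm : ∀ k ∈ Finset.range n,
        |c (n - k) * u (k + 1)| ≤ 2 ^ k * (c (n + 1) / c 0) := by
      intro k hk
      have hk' := Finset.mem_range.1 hk
      have h2 := hcheb (n - k) (k + 1) (by omega)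
      rw [show n - k + (k + 1) = n + 1 by omega] at h2
      rw [abs_mul, abs_of_nonneg (hc _)]
      calc c (n - k) * |u (k + 1)| ≤ c (n - k) * (2 ^ k * c (k + 1) / c 0 ^ 2) :=
            mul_le_mul_of_nonneg_left (ih k hk') (hc _)
        _ = 2 ^ k * (c (n - k) * c (k + 1)) / c 0 ^ 2 := by ring
        _ ≤ 2 ^ k * (c 0 * c (n + 1)) / c 0 ^ 2 := by gcongr
        _ = 2 ^ k * (c (n + 1) / c 0) := by field_simp
    have hS : |∑ k ∈ Finset.range n, c (n - k) * u (k + 1)|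
        ≤ (2 ^ n - 1) * (c (n + 1) / c 0) := by
      refine (Finset.abs_sum_le_sum_abs _ _).trans ((Finset.sum_le_sum hterm).trans ?_)
      rw [← Finset.sum_mul, geom_sum_eq (by norm_num)]
      norm_num
    have hmul : c 0 * |u (n + 1)| ≤ 2 ^ n * (c (n + 1) / c 0) := by
      rw [← abs_of_pos hc0, ← abs_mul, abs_of_pos hc0]
      rw [abs_le] at hS ⊢
      rw [← div_eq_mul_inv] at h
      have hC : 0 ≤ c (n + 1) / c 0 := div_nonneg (hc _) hc0.le
      constructor <;> linarith [hS.1, hS.2]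
    rw [le_div_iff₀ (by positivity)]
    calc |u (n + 1)| * c 0 ^ 2 = c 0 * (c 0 * |u (n + 1)|) := by ring
      _ ≤ c 0 * (2 ^ n * (c (n + 1) / c 0)) := by gcongr
      _ = 2 ^ n * c (n + 1) := by field_simp

/-! ### Moments -/

/-- Chebyshev's inequality for moments: `(x^i - m^i)(x^j - m^j) ≥ 0` on `[0, ∞)` is integrated with
`m` chosen so that `m^i` is the mean of `x^i`. -/
lemma chebyshev_moment {μ : Measure ℝ} [IsFiniteMeasure μ]
    (hintg : ∀ n : ℕ, Integrable (fun x : ℝ => x ^ n) μ) (hpos : ∀ᵐ x ∂μ, 0 ≤ x)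
    (h0 : 0 < ∫ x, x ^ 0 ∂μ) {i : ℕ} (j : ℕ) (hi : 0 < i) :
    (∫ x, x ^ i ∂μ) * (∫ x, x ^ j ∂μ) ≤ (∫ x, x ^ 0 ∂μ) * ∫ x, x ^ (i + j) ∂μ := by
  have hci : 0 ≤ ∫ x, x ^ i ∂μ :=
    integral_nonneg_of_ae (hpos.mono fun x hx => pow_nonneg hx i)
  obtain ⟨m, hm0, hm⟩ : ∃ m : ℝ, 0 ≤ m ∧ m ^ i = (∫ x, x ^ i ∂μ) / ∫ x, x ^ 0 ∂μ :=
    ⟨_, Real.rpow_nonneg (div_nonneg hci h0.le) _,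
      Real.rpow_inv_natCast_pow (div_nonneg hci h0.le) hi.ne'⟩
  have hnn : 0 ≤ ∫ x, (x ^ (i + j) - m ^ i * x ^ j - (m ^ j * x ^ i - m ^ (i + j) * x ^ 0)) ∂μ := by
    refine integral_nonneg_of_ae (hpos.mono fun x hx => ?_)
    have : 0 ≤ (x ^ i - m ^ i) * (x ^ j - m ^ j) := by
      rcases le_total x m with h | h
      · exact mul_nonneg_of_nonpos_of_nonpos
          (sub_nonpos.2 (pow_le_pow_left₀ hx h i)) (sub_nonpos.2 (pow_le_pow_left₀ hx h j))
      · exact mul_nonneg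
          (sub_nonneg.2 (pow_le_pow_left₀ hm0 h i)) (sub_nonneg.2 (pow_le_pow_left₀ hm0 h j))
    refine this.trans_eq ?_
    ring
  have hintg' : ∀ (r : ℝ) (n : ℕ), Integrable (fun x : ℝ => r * x ^ n) μ :=
    fun r n => (hintg n).const_mul r
  rw [integral_sub (by exact (hintg _).sub (hintg' _ _)) (by exact (hintg' _ _).sub (hintg' _ _)),
    integral_sub (hintg _) (hintg' _ _), integral_sub (hintg' _ _) (hintg' _ _),
    integral_const_mul, integral_const_mul, integral_const_mul, pow_add m, hm] at hnn
  have h2 : (∫ x, x ^ i ∂μ) / (∫ x, x ^ 0 ∂μ) * (∫ x, x ^ j ∂μ) ≤ ∫ x, x ^ (i + j) ∂μ := by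
    have h3 : (∫ x, x ^ i ∂μ) / (∫ x, x ^ 0 ∂μ) * m ^ j * (∫ x, x ^ 0 ∂μ)
        = m ^ j * ∫ x, x ^ i ∂μ := by
      rw [mul_right_comm, div_mul_cancel₀ _ h0.ne', mul_comm]
    linarith
  rw [div_mul_eq_mul_div, div_le_iff₀ h0] at h2
  linarith

/-! ### Expansion of the Cauchy transform along the imaginary axis -/

namespace SignMeasure

/-- The `n`-th remainder `∫ x^n z/(z - x) ds(x)`, at `z = iy`, of the expansion of `z ŝ(z)` in
powers of `1/z`. -/
def momentRemainder (s : SignMeasure) (n : ℕ) (y : ℝ) : ℂ :=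
  (s.sign : ℂ) * ∫ x, (x : ℂ) ^ n * ((Complex.I * y) * (Complex.I * y - (x : ℂ))⁻¹) ∂s.μ

lemma I_mul_sub_ne_zero {y : ℝ} (hy : 0 < y) (x : ℝ) : Complex.I * y - (x : ℂ) ≠ 0 := by
  intro h
  have := congrArg Complex.im h
  simp at this
  exact hy.ne' this

/-- The kernel `z/(z - x)` is bounded by `1` at `z = iy`, since `|iy - x| ≥ y`. -/
lemma norm_kernel_le {y : ℝ} (hy : 0 < y) (x : ℝ) :
    ‖(Complex.I * y) * (Complex.I * y - (x : ℂ))⁻¹‖ ≤ 1 := by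
  rw [norm_mul, norm_inv, ← div_eq_mul_inv,
    div_le_one (norm_pos_iff.2 (I_mul_sub_ne_zero hy x))]
  have := Complex.abs_im_le_norm (Complex.I * y - (x : ℂ))
  simpa using this

lemma norm_integrand_le {y : ℝ} (hy : 0 < y) (n : ℕ) (x : ℝ) :
    ‖(x : ℂ) ^ n * ((Complex.I * y) * (Complex.I * y - (x : ℂ))⁻¹)‖ ≤ ‖x ^ n‖ := by
  rw [norm_mul, norm_pow, Complex.norm_real, norm_pow]
  exact mul_le_of_le_one_right (by positivity) (norm_kernel_le hy x)

lemma integrand_aestronglyMeasurable (μ : Measure ℝ) (n : ℕ) (y : ℝ) :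
    AEStronglyMeasurable
      (fun x : ℝ => (x : ℂ) ^ n * ((Complex.I * y) * (Complex.I * y - (x : ℂ))⁻¹)) μ := by
  have : Measurable
      (fun x : ℝ => (x : ℂ) ^ n * ((Complex.I * y) * (Complex.I * y - (x : ℂ))⁻¹)) := by
    fun_prop
  exact this.aestronglyMeasurable

lemma MemM.integrable_integrand {s : SignMeasure} (hs : s.MemM) (n : ℕ) {y : ℝ} (hy : 0 < y) :
    Integrable
      (fun x : ℝ => (x : ℂ) ^ n * ((Complex.I * y) * (Complex.I * y - (x : ℂ))⁻¹)) s.μ :=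
  (hs.2 n).mono (integrand_aestronglyMeasurable _ n y)
    (Eventually.of_forall fun x => norm_integrand_le hy n x)

lemma ofReal_moment (s : SignMeasure) (n : ℕ) :
    (s.moment n : ℂ) = (s.sign : ℂ) * ∫ x, (x : ℂ) ^ n ∂s.μ := by
  rw [moment, Complex.ofReal_mul, ← integral_complex_ofReal]
  simp

/-- Integrated form of `z/(z - x) = 1 + (1/z) * x * z/(z - x)`. -/
lemma MemM.momentRemainder_eq {s : SignMeasure} (hs : s.MemM) (n : ℕ) {y : ℝ} (hy : 0 < y) :
    s.momentRemainder n y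
      = s.moment n + (Complex.I * y)⁻¹ * s.momentRemainder (n + 1) y := by
  have hintg : Integrable (fun x : ℝ => (x : ℂ) ^ n) s.μ := by
    simpa using (hs.2 n).ofReal (𝕜 := ℂ)
  have hpt : ∀ x : ℝ, (x : ℂ) ^ n * ((Complex.I * y) * (Complex.I * y - (x : ℂ))⁻¹)
      = (x : ℂ) ^ n + (Complex.I * y)⁻¹ *
        ((x : ℂ) ^ (n + 1) * ((Complex.I * y) * (Complex.I * y - (x : ℂ))⁻¹)) := by
    intro x
    have h1 := I_mul_sub_ne_zero hy x
    have h2 : Complex.I * (y : ℂ) ≠ 0 := by simpa using I_mul_sub_ne_zero hy 0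
    generalize Complex.I * (y : ℂ) = z at h1 h2 ⊢
    field_simp
    ring
  rw [ofReal_moment, momentRemainder, momentRemainder, integral_congr_ae (ae_of_all _ hpt),
    integral_add hintg ((hs.integrable_integrand (n + 1) hy).const_mul _), integral_const_mul]
  ring

lemma MemM.tendsto_momentRemainder {s : SignMeasure} (hs : s.MemM) (n : ℕ) :
    Tendsto (s.momentRemainder n) atTop (nhds (s.moment n : ℂ)) := by
  rw [ofReal_moment]
  refine Tendsto.const_mul _ ?_
  refine tendsto_integral_filter_of_dominated_convergence (fun x => ‖x ^ n‖)
    (Eventually.of_forall fun y => integrand_aestronglyMeasurable _ n y) ?_ (hs.2 n).norm ?_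
  · filter_upwards [eventually_gt_atTop 0] with y hy
    exact Eventually.of_forall fun x => norm_integrand_le hy n x
  · refine Eventually.of_forall fun x => ?_
    have hinv : Tendsto (fun y : ℝ => (y : ℂ)⁻¹) atTop (nhds 0) := by
      simpa [Function.comp_def] using
        (Complex.continuous_ofReal.tendsto 0).comp tendsto_inv_atTop_zero
    have hlim : Tendsto (fun y : ℝ => (x : ℂ) ^ n * (1 - Complex.I⁻¹ * (y : ℂ)⁻¹ * x)⁻¹) atTop
        (nhds ((x : ℂ) ^ n * (1 - Complex.I⁻¹ * 0 * x)⁻¹)) :=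
      (((hinv.const_mul _).mul_const _).const_sub 1).inv₀ (by simp) |>.const_mul _
    simp only [mul_zero, zero_mul, sub_zero, inv_one, mul_one] at hlim
    refine hlim.congr' ?_
    filter_upwards [eventually_gt_atTop 0] with y hy
    have h2 : Complex.I * (y : ℂ) ≠ 0 := by simpa using I_mul_sub_ne_zero hy 0
    have h3 : 1 - Complex.I⁻¹ * (y : ℂ)⁻¹ * x
        = (Complex.I * y)⁻¹ * (Complex.I * y - (x : ℂ)) := by
      rw [mul_sub, inv_mul_cancel₀ h2, mul_inv]
    rw [h3, mul_inv, inv_inv]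

lemma cauchy_eq_momentRemainder (s : SignMeasure) {y : ℝ} (hy : 0 < y) :
    s.cauchy (Complex.I * y) = (Complex.I * y)⁻¹ * s.momentRemainder 0 y := by
  have h2 : Complex.I * (y : ℂ) ≠ 0 := by simpa using I_mul_sub_ne_zero hy 0
  simp only [cauchy, momentRemainder, pow_zero, one_mul]
  rw [integral_const_mul, mul_left_comm, inv_mul_cancel_left₀ h2]

lemma ae_mem_support (s : SignMeasure) : ∀ᵐ x ∂s.μ, x ∈ s.support := by
  refine measure_null_of_locally_null _ fun x hx => ?_
  simp only [support, mem_compl_iff, mem_ofPred_eq, not_forall, not_lt, nonpos_iff_eq_zero] at hx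
  obtain ⟨ε, hε, h0⟩ := hx
  exact ⟨_, mem_nhdsWithin_of_mem_nhds (Ioo_mem_nhds (by linarith) (by linarith)), h0⟩

lemma MemM.measure_univ_pos {s : SignMeasure} (hs : s.MemM) : 0 < s.μ univ := by
  obtain ⟨x, hx⟩ := hs.1.nonempty
  exact (hx 1 one_pos).trans_le (measure_mono (subset_univ _))

end SignMeasure

/-! ### The moments of the inverse measure -/

/-- Moment bound for the inverse measure: if `τ` is the inverse
measure of a positive `σ ∈ M(Δ)`, `Δ ⊂ [0,∞)`, i.e. `1/σ̂(z) = az + b + τ̂(z)` with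
`a = 1/|σ|`, then `|d_n| ≤ 2^{n+1} c_{n+2} / c₀²` for every `n`. -/
theorem inverse_measure_moment_bound (σ τ : SignMeasure) (b : ℝ)
    (hσpos : σ.sign = 1) (hσ : σ.MemM) (hτ : τ.MemM)
    (hΔ : σ.interval ⊆ Set.Ici (0 : ℝ))
    (hτsupp : τ.support ⊆ σ.interval)
    (hinv : ∀ z ∈ offInterval σ,
      (σ.cauchy z)⁻¹ = ((σ.totalVariation : ℂ))⁻¹ * z + (b : ℂ) + τ.cauchy z)
    (n : ℕ) :
    |τ.moment n| ≤ 2 ^ (n + 1) * σ.moment (n + 2) / (σ.moment 0) ^ 2 := by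
  have := σ.finite
  have hmom : ∀ k, σ.moment k = ∫ x, x ^ k ∂σ.μ := fun k => by simp [SignMeasure.moment, hσpos]
  have htv : σ.totalVariation = σ.moment 0 := by
    simp [hmom, SignMeasure.totalVariation, Measure.real]
  have hc0 : 0 < σ.moment 0 := by
    rw [← htv]
    exact ENNReal.toReal_pos hσ.measure_univ_pos.ne' (measure_ne_top _ _)
  have hpos : ∀ᵐ x ∂σ.μ, 0 ≤ x :=
    σ.ae_mem_support.mono fun x hx => hΔ (subset_convexHull ℝ _ hx)
  have hc : ∀ i, 0 ≤ σ.moment i := fun i => by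
    rw [hmom]
    exact integral_nonneg_of_ae (hpos.mono fun x hx => pow_nonneg hx i)
  have hcheb : ∀ i j, 0 < i → σ.moment i * σ.moment j ≤ σ.moment 0 * σ.moment (i + j) := by
    intro i j hi
    simp only [hmom] at hc0 ⊢
    exact chebyshev_moment hσ.2 hpos hc0 j hi
  -- The coefficients `a, b, d₀, d₁, …` of the expansion of `1/(z σ̂(z))`, and its remainders.
  let u : ℕ → ℝ
    | 0 => (σ.moment 0)⁻¹
    | 1 => b
    | k + 2 => τ.moment k
  let U : ℕ → ℝ → ℂ
    | 0 => fun y => (u 0 : ℂ) + (Complex.I * y)⁻¹ *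
        (b + (Complex.I * y)⁻¹ * τ.momentRemainder 0 y)
    | 1 => fun y => b + (Complex.I * y)⁻¹ * τ.momentRemainder 0 y
    | k + 2 => τ.momentRemainder k
  have hU : ∀ k, ∀ᶠ y in atTop, U k y = (u k : ℂ) + (Complex.I * (y : ℂ))⁻¹ * U (k + 1) y
    | 0 => Eventually.of_forall fun y => rfl
    | 1 => Eventually.of_forall fun y => rfl
    | k + 2 => (eventually_gt_atTop 0).mono fun y hy => hτ.momentRemainder_eq k hy
  have hw : Tendsto (fun y : ℝ => (Complex.I * (y : ℂ))⁻¹) atTop (nhds 0) := by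
    have := ((Complex.continuous_ofReal.tendsto 0).comp tendsto_inv_atTop_zero).const_mul
      Complex.I⁻¹
    simpa [Function.comp_def, mul_comm] using this
  have hU1 : Tendsto (U 1) atTop (nhds (u 1 : ℂ)) := by
    have h := (hw.mul (hτ.tendsto_momentRemainder 0)).const_add (b : ℂ)
    rwa [zero_mul, add_zero] at h
  have hU0 : Tendsto (U 0) atTop (nhds (u 0 : ℂ)) := by
    have h := (hw.mul hU1).const_add (u 0 : ℂ)
    rwa [zero_mul, add_zero] at h
  have hUl : ∀ k, Tendsto (U k) atTop (nhds (u k : ℂ))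
    | 0 => hU0
    | 1 => hU1
    | k + 2 => hτ.tendsto_momentRemainder k
  have hne : ∀ᶠ y in atTop, σ.momentRemainder 0 y ≠ 0 :=
    (hσ.tendsto_momentRemainder 0).eventually_ne (by exact_mod_cast hc0.ne')
  have h1 : ∀ᶠ y in atTop, σ.momentRemainder 0 y * U 0 y = 1 := by
    -- `hne` excludes the points where `σ̂(z)⁻¹` has its junk value `0`.
    filter_upwards [hne, eventually_gt_atTop 0] with y hy0 hy
    have hz : Complex.I * (y : ℂ) ≠ 0 := by
      simpa using SignMeasure.I_mul_sub_ne_zero hy 0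
    have h := hinv (Complex.I * y) fun x _ => sub_ne_zero.1 (SignMeasure.I_mul_sub_ne_zero hy x)
    rw [SignMeasure.cauchy_eq_momentRemainder σ hy, SignMeasure.cauchy_eq_momentRemainder τ hy,
      htv, mul_inv, inv_inv] at h
    have hU0eq : U 0 y = (σ.momentRemainder 0 y)⁻¹ := by
      apply mul_left_cancel₀ hz
      rw [h]
      simp only [U, u, Complex.ofReal_inv]
      rw [mul_add, mul_inv_cancel_left₀ hz]
      ring
    rw [hU0eq, mul_inv_cancel₀ hy0]
  have hrec : ∀ k, ∑ i ∈ Finset.range (k + 2), σ.moment i * u (k + 1 - i) = 0 := by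
    intro k
    have := cauchyProduct_eq_zero (l := atTop) (w := fun y : ℝ => (Complex.I * (y : ℂ))⁻¹)
      (S := σ.momentRemainder) (U := U) (s := fun i => (σ.moment i : ℂ)) (u := fun i => (u i : ℂ))
      ((eventually_gt_atTop 0).mono fun y hy =>
        inv_ne_zero (by simpa using SignMeasure.I_mul_sub_ne_zero hy 0))
      (fun i => (eventually_gt_atTop 0).mono fun y hy => hσ.momentRemainder_eq i hy)
      hU hσ.tendsto_momentRemainder hUl h1 k
    exact_mod_cast this
  exact abs_le_of_cauchyProduct_eq_zero hc0 hc hcheb rfl hrec (n + 1)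

end
end
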